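/- Let x : [0,1] → ℝ be continuous, nondecreasing, non-constant, and anti-symmetric about c = 1/2, i.e. x(c + s) + x(c − s) = 2x(c) for all s ∈ [0, 1/2]. Then the HK update Tx is also anti-symmetric about c, i.e. Tx(c + s) + Tx(c − s) = 2·Tx(c) for all s ∈ [0, 1/2], and Tx(c) = x(c). -/

import Mathlib

open MeasureTheory Set

/-- The neighbourhood set `N_x(α) = {β ∈ [0,1] : |x(β) − x(α)| ≤ 1}`. -/
def hkNbhd (x : ℝ → ℝ) (α : ℝ) : Set ℝ :=
  {β | β ∈ Icc (0:ℝ) 1 ∧ |x β - x α| ≤ 1}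

/-- The continuous-agent Hegselmann–Krause update
`Tx(α) = (∫_{N_x(α)} x dμ) / μ(N_x(α))`. -/
noncomputable def hkT (x : ℝ → ℝ) : ℝ → ℝ :=
  fun α => (∫ β in hkNbhd x α, x β) / (volume (hkNbhd x α)).toReal

/-- A function `x : [0,1] → ℝ` is regular if it is continuous, nondecreasing,
differentiable outside a set of measure zero, and there are constants
`0 < m ≤ M` with `m ≤ x′ ≤ M` wherever the derivative exists. -/
def Regular (x : ℝ → ℝ) : Prop :=
  ContinuousOn x (Icc 0 1) ∧ MonotoneOn x (Icc 0 1) ∧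
  ∃ m M : ℝ, 0 < m ∧ m ≤ M ∧
    (∀ᵐ α ∂(volume.restrict (Icc (0:ℝ) 1)), DifferentiableAt ℝ x α) ∧
    ∀ α ∈ Icc (0:ℝ) 1, DifferentiableAt ℝ x α → m ≤ deriv x α ∧ deriv x α ≤ M

/-!
The reflection `β ↦ 1 - β` preserves Lebesgue measure and, since `x (1 - β) = 2 x(1/2) - x β`,
carries `N_x(1 - α)` onto `N_x(α)`. Averaging this identity over `N_x(α)` gives
`Tx(1 - α) = 2 x(1/2) - Tx(α)`, and `α = 1/2` gives `Tx(1/2) = x(1/2)`. When `x` is continuous,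
every neighbourhood `N_x(α)` has positive measure, so none of these averages is a junk `0 / 0`.
-/

open scoped Topology

section Average

variable {X Y E : Type*} [MeasurableSpace X] [MeasurableSpace Y]
  [NormedAddCommGroup E] [NormedSpace ℝ E] {μ : Measure X} {ν : Measure Y}

theorem average_const_sub [CompleteSpace E] [IsFiniteMeasure μ] [NeZero μ] {f : X → E}
    (hf : Integrable f μ) (c : E) : ⨍ a, (c - f a) ∂μ = c - ⨍ a, f a ∂μ := by
  calc ⨍ a, (c - f a) ∂μ = ⨍ _, c ∂μ - ⨍ a, f a ∂μ :=
        integral_sub (integrable_const c).to_average hf.to_average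
    _ = c - ⨍ a, f a ∂μ := by rw [average_const]

theorem setAverage_preimage_emb {f : X → Y} (hf : MeasurePreserving f μ ν)
    (hemb : MeasurableEmbedding f) (g : Y → E) (s : Set Y) :
    ⨍ a in f ⁻¹' s, g (f a) ∂μ = ⨍ b in s, g b ∂ν := by
  rw [setAverage_eq, setAverage_eq, hf.setIntegral_preimage_emb hemb, measureReal_def,
    hf.measure_preimage_emb hemb, ← measureReal_def]

end Average

theorem measure_pos_of_mem_nhdsWithin {X : Type*} [TopologicalSpace X] [MeasurableSpace X]
    {μ : Measure X} [μ.IsOpenPosMeasure] {s t : Set X} {a : X} (ha : a ∈ closure (interior t))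
    (hs : s ∈ 𝓝[t] a) : 0 < μ s := by
  obtain ⟨u, hu, hau, hsub⟩ := mem_nhdsWithin.mp hs
  have hne : (u ∩ interior t).Nonempty := mem_closure_iff.mp ha u hu hau
  exact ((hu.inter isOpen_interior).measure_pos μ hne).trans_le
    (measure_mono ((inter_subset_inter_right u interior_subset).trans hsub))

theorem forall_half_add_add_half_sub_iff {M : Type*} [AddCommMagma M] {f : ℝ → M} {k : M} :
    (∀ s ∈ Icc (0 : ℝ) (1 / 2), f (1 / 2 + s) + f (1 / 2 - s) = k) ↔
      ∀ β ∈ Icc (0 : ℝ) 1, f β + f (1 - β) = k := by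
  refine ⟨fun h β ⟨hβ₀, hβ₁⟩ => ?_, fun h s ⟨hs₀, hs₁⟩ => ?_⟩
  · rcases le_total β (1 / 2) with hβ | hβ
    · rw [add_comm]
      convert h (1 / 2 - β) ⟨by linarith, by linarith⟩ using 3 <;> ring
    · convert h (β - 1 / 2) ⟨by linarith, by linarith⟩ using 3 <;> ring
  · convert h (1 / 2 + s) ⟨by linarith, by linarith⟩ using 3
    ring

section HegselmannKrause

variable {x : ℝ → ℝ} {α k : ℝ}

theorem hkNbhd_eq_preimage_inter (x : ℝ → ℝ) (α : ℝ) :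
    hkNbhd x α = x ⁻¹' Metric.closedBall (x α) 1 ∩ Icc 0 1 :=
  inter_comm _ _

theorem volume_hkNbhd_ne_top (x : ℝ → ℝ) (α : ℝ) : volume (hkNbhd x α) ≠ ⊤ :=
  measure_ne_top_of_subset (fun _ hβ => hβ.1) measure_Icc_lt_top.ne

theorem volume_hkNbhd_pos (hx : ContinuousOn x (Icc 0 1)) (hα : α ∈ Icc (0 : ℝ) 1) :
    0 < volume (hkNbhd x α) := by
  refine measure_pos_of_mem_nhdsWithin (t := Icc 0 1)
    (by rwa [closure_interior_Icc zero_ne_one]) ?_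
  rw [hkNbhd_eq_preimage_inter]
  exact Filter.inter_mem (hx α hα (Metric.closedBall_mem_nhds _ one_pos)) self_mem_nhdsWithin

theorem nullMeasurableSet_hkNbhd (hx : AEMeasurable x (volume.restrict (Icc 0 1))) (α : ℝ) :
    NullMeasurableSet (hkNbhd x α) := by
  rw [hkNbhd_eq_preimage_inter, ← nullMeasurableSet_restrict measurableSet_Icc.nullMeasurableSet]
  exact hx.nullMeasurableSet_preimage Metric.isClosed_closedBall.measurableSet

theorem integrableOn_hkNbhd (hx : AEMeasurable x (volume.restrict (Icc 0 1))) (α : ℝ) :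
    IntegrableOn x (hkNbhd x α) := by
  have hbound : ∀ β ∈ hkNbhd x α, ‖x β‖ ≤ ‖x α‖ + 1 := fun β hβ =>
    norm_le_norm_add_const_of_dist_le hβ.2
  exact .of_bound (volume_hkNbhd_ne_top x α).lt_top
    (hx.mono_set fun _ hβ => hβ.1).aestronglyMeasurable _
    ((ae_restrict_mem₀ (nullMeasurableSet_hkNbhd hx α)).mono hbound)

theorem hkT_eq_setAverage (x : ℝ → ℝ) (α : ℝ) : hkT x α = ⨍ β in hkNbhd x α, x β := by
  rw [setAverage_eq, smul_eq_mul, ← div_eq_inv_mul]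
  rfl

theorem hkNbhd_one_sub (hsum : ∀ β ∈ Icc (0 : ℝ) 1, x β + x (1 - β) = k)
    (hα : α ∈ Icc (0 : ℝ) 1) : hkNbhd x (1 - α) = (1 - ·) ⁻¹' hkNbhd x α := by
  ext β
  have hmem : 1 - β ∈ Icc (0 : ℝ) 1 ↔ β ∈ Icc (0 : ℝ) 1 := Icc.mem_iff_one_sub_mem.symm
  simp only [hkNbhd, mem_preimage, mem_ofPred_eq, hmem]
  refine and_congr_right fun hβ => ?_
  have hdist : x (1 - β) - x α = -(x β - x (1 - α)) := by linarith [hsum α hα, hsum β hβ]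
  rw [hdist, abs_neg]

theorem hkT_add_hkT_one_sub (hx : AEMeasurable x (volume.restrict (Icc 0 1)))
    (hsum : ∀ β ∈ Icc (0 : ℝ) 1, x β + x (1 - β) = k) (hα : α ∈ Icc (0 : ℝ) 1)
    (hpos : 0 < volume (hkNbhd x α)) : hkT x α + hkT x (1 - α) = k := by
  have : IsFiniteMeasure (volume.restrict (hkNbhd x α)) :=
    isFiniteMeasure_restrict.mpr (volume_hkNbhd_ne_top x α)
  have : NeZero (volume.restrict (hkNbhd x α)) :=
    ⟨Measure.restrict_eq_zero.not.mpr hpos.ne'⟩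
  have hreflect : ∀ β ∈ hkNbhd x α, x (1 - β) = k - x β := fun β hβ =>
    eq_sub_of_add_eq' (hsum β hβ.1)
  have hupdate : hkT x (1 - α) = k - hkT x α := calc
    hkT x (1 - α) = ⨍ β in (1 - ·) ⁻¹' hkNbhd x α, x β := by
      rw [hkT_eq_setAverage, hkNbhd_one_sub hsum hα]
    _ = ⨍ β in (1 - ·) ⁻¹' hkNbhd x α, x (1 - (1 - β)) := by simp only [sub_sub_cancel]
    _ = ⨍ β in hkNbhd x α, x (1 - β) :=
      setAverage_preimage_emb (Measure.measurePreserving_sub_left volume 1)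
        (MeasurableEquiv.subLeft 1).measurableEmbedding (fun β => x (1 - β)) _
    _ = ⨍ β in hkNbhd x α, (k - x β) :=
      average_congr ((ae_restrict_mem₀ (nullMeasurableSet_hkNbhd hx α)).mono hreflect)
    _ = k - hkT x α := by
      rw [average_const_sub (integrableOn_hkNbhd hx α), hkT_eq_setAverage]
  rw [hupdate, add_sub_cancel]

end HegselmannKrause

theorem hk_antisymmetry_preserved_general (x : ℝ → ℝ)
    (hmeas : AEMeasurable x (volume.restrict (Icc 0 1)))
    (hpos : ∀ α ∈ Icc (0 : ℝ) 1, 0 < volume (hkNbhd x α))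
    (hsym : ∀ s ∈ Icc (0 : ℝ) (1 / 2), x (1 / 2 + s) + x (1 / 2 - s) = 2 * x (1 / 2)) :
    (∀ s ∈ Icc (0 : ℝ) (1 / 2),
      hkT x (1 / 2 + s) + hkT x (1 / 2 - s) = 2 * hkT x (1 / 2)) ∧
    hkT x (1 / 2) = x (1 / 2) := by
  have hsum : ∀ α ∈ Icc (0 : ℝ) 1, hkT x α + hkT x (1 - α) = 2 * x (1 / 2) := fun α hα =>
    hkT_add_hkT_one_sub hmeas (forall_half_add_add_half_sub_iff.mp hsym) hα (hpos α hα)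
  have hcenter : hkT x (1 / 2) = x (1 / 2) := by
    have h := hsum (1 / 2) (by norm_num)
    rw [sub_half] at h
    linarith
  refine ⟨?_, hcenter⟩
  rw [hcenter]
  exact forall_half_add_add_half_sub_iff.mpr hsum

/-- Anti-symmetry about the centre `c = 1/2` is preserved by the HK update, and
the opinion of the central agent is fixed. -/
theorem hk_antisymmetry_preserved (x : ℝ → ℝ)
    (hcont : ContinuousOn x (Icc 0 1)) (hmono : MonotoneOn x (Icc 0 1))
    (hnonconst : ∃ a ∈ Icc (0:ℝ) 1, ∃ b ∈ Icc (0:ℝ) 1, x a ≠ x b)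
    (hsym : ∀ s ∈ Icc (0:ℝ) (1/2), x (1/2 + s) + x (1/2 - s) = 2 * x (1/2)) :
    (∀ s ∈ Icc (0:ℝ) (1/2),
      hkT x (1/2 + s) + hkT x (1/2 - s) = 2 * hkT x (1/2)) ∧
    hkT x (1/2) = x (1/2) :=
  hk_antisymmetry_preserved_general x (hcont.aemeasurable measurableSet_Icc)
    (fun _ hα => volume_hkNbhd_pos hcont hα) hsym
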